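/- arXiv:2206.00976 — 4 statements merged into one kernel-verified Lean document; each statement's English description precedes it below -/
import Mathlib

section
/- Let G = (U ∪ V, E) be a Δ-regular bipartite simple graph with an orientation of its edges such that for every edge e = {u,v}, if e is oriented from u to v then x_v − x_u ≤ 1 (a stable edge orientation). Color every edge oriented from its U-endpoint to its V-endpoint red, and every edge oriented from its V-endpoint to its U-endpoint blue. Then every red edge has at most Δ − 1 adjacent red edges, and every blue edge has at most Δ − 1 adjacent blue edges. -/
/-!
Suppose `a → b` is an edge. A vertex on the side of `a` emits exactly its edges of the colour of
`ab`, and a vertex on the side of `b` receives exactly its edges of that colour. Hence the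
same-coloured edges adjacent to `ab` are the `x b - 1` other edges into `b` together with the
`(Δ - x a) - 1` other edges out of `a`. Their number is at most `Δ + (x b - x a) - 2 ≤ Δ - 1` by
stability. The lemma `color_bound` states this for an arbitrary choice `S` of the side from which
the coloured edges emanate; red is `S = Uside` and blue is the complementary side.
-/

/-- The out-degree of `a` is `Δ - x a`, stated without subtraction. -/
lemma in_add_out {α : Type*} [Fintype α] (G : SimpleGraph α) (ori : α → α → Prop)
    (hori : ∀ u v : α, G.Adj u v → (ori u v ↔ ¬ ori v u)) (a : α) :
    {w : α | G.Adj w a ∧ ori w a}.ncard + {w : α | G.Adj a w ∧ ori a w}.ncard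
      = (G.neighborSet a).ncard := by
  rw [← Set.ncard_union_eq _ (Set.toFinite _) (Set.toFinite _)]
  · congr 1
    ext w
    have h := hori a w
    simp only [Set.mem_union, Set.mem_setOf_eq, SimpleGraph.mem_neighborSet, G.adj_comm w a]
    tauto
  · rw [Set.disjoint_left]
    rintro w ⟨_, h1⟩ ⟨h2, h3⟩
    exact (hori a w h2).1 h3 h1

/-- The bound for one colour class `C`, consisting of the edges oriented out of the side `S`. -/
lemma color_bound {α : Type*} [Fintype α] (G : SimpleGraph α) (Δ : ℕ)
    (hreg : ∀ v : α, (G.neighborSet v).ncard = Δ)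
    (S : α → Prop)
    (hbip : ∀ u v : α, G.Adj u v → (S u ↔ ¬ S v))
    (ori : α → α → Prop)
    (hori : ∀ u v : α, G.Adj u v → (ori u v ↔ ¬ ori v u))
    (x : α → ℕ)
    (hx : ∀ w : α, x w = {u : α | G.Adj u w ∧ ori u w}.ncard)
    (hstable : ∀ u v : α, G.Adj u v → ori u v → (x v : ℤ) - (x u : ℤ) ≤ 1)
    (C : Sym2 α → Prop)
    (hC : ∀ u v : α, G.Adj u v → S u → ¬ S v → (C s(u, v) ↔ ori u v)) :
    ∀ e ∈ G.edgeSet, C e →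
      ({e' | e' ∈ G.edgeSet ∧ e' ≠ e ∧ (∃ w, w ∈ e ∧ w ∈ e') ∧ C e'}.ncard : ℤ)
        ≤ (Δ : ℤ) - 1 := by
  -- Every edge can be written with its `S`-endpoint first.
  have key : ∀ e ∈ G.edgeSet, ∃ a b, e = s(a, b) ∧ G.Adj a b ∧ S a ∧ ¬ S b := by
    intro e he
    induction e using Sym2.ind with
    | _ a b =>
      rw [SimpleGraph.mem_edgeSet] at he
      by_cases ha : S a
      · exact ⟨a, b, rfl, he, ha, (hbip a b he).1 ha⟩
      · exact ⟨b, a, Sym2.eq_swap, he.symm, (hbip b a he.symm).2 ha, ha⟩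
  intro e he hCe
  obtain ⟨a, b, rfl, hab, ha, hb⟩ := key e he
  have hor : ori a b := (hC a b hab ha hb).1 hCe
  set I : Set α := {w | G.Adj w b ∧ ori w b} with hI
  set O : Set α := {w | G.Adj a w ∧ ori a w} with hO
  have hsub : {e' | e' ∈ G.edgeSet ∧ e' ≠ s(a, b) ∧ (∃ w, w ∈ s(a, b) ∧ w ∈ e') ∧ C e'} ⊆
      (fun w => s(w, b)) '' (I \ {a}) ∪ (fun w => s(a, w)) '' (O \ {b}) := by
    rintro e' ⟨he', hne, ⟨w, hw, hw'⟩, hCe'⟩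
    obtain ⟨c, d, rfl, hcd, hc, hd⟩ := key e' he'
    have hocd : ori c d := (hC c d hcd hc hd).1 hCe'
    rw [Sym2.mem_iff] at hw hw'
    -- Since `a, c` lie in `S` and `b, d` do not, a shared endpoint forces `a = c` or `b = d`.
    have hcases : c = a ∨ d = b := by
      rcases hw with rfl | rfl <;> rcases hw' with rfl | rfl <;> simp_all
    rcases hcases with rfl | rfl
    · exact Or.inr ⟨d, ⟨⟨hcd, hocd⟩, fun h => hne (by rw [Set.mem_singleton_iff.1 h])⟩, rfl⟩
    · exact Or.inl ⟨c, ⟨⟨hcd, hocd⟩, fun h => hne (by rw [Set.mem_singleton_iff.1 h])⟩, rfl⟩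
  have h1 := Set.ncard_le_ncard hsub (Set.toFinite _)
  have h2 := Set.ncard_union_le ((fun w => s(w, b)) '' (I \ {a})) ((fun w => s(a, w)) '' (O \ {b}))
  have h3 := Set.ncard_image_le (f := fun w => s(w, b)) (Set.toFinite (I \ {a}))
  have h4 := Set.ncard_image_le (f := fun w => s(a, w)) (Set.toFinite (O \ {b}))
  have h5 := Set.ncard_diff_singleton_add_one (show a ∈ I from ⟨hab, hor⟩) (Set.toFinite _)
  have h6 := Set.ncard_diff_singleton_add_one (show b ∈ O from ⟨hab, hor⟩) (Set.toFinite _)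
  have h7 := in_add_out G ori hori a
  rw [hreg, ← hx, ← hO] at h7
  have h8 := hx b
  rw [← hI] at h8
  have h9 := hstable a b hab hor
  omega

/-- Let `G = (U ∪ V, E)` be a `Δ`-regular bipartite simple graph with a
stable edge orientation (if an edge is oriented from `u` to `v` then `x v - x u ≤ 1`, where
`x w` is the number of edges oriented towards `w`).  Color red every edge oriented from its
`U`-endpoint to its `V`-endpoint, and blue every edge oriented the other way.  Then every red
edge has at most `Δ - 1` adjacent red edges, and every blue edge has at most `Δ - 1` adjacent
blue edges. -/
theorem stmt0 {α : Type*} [Fintype α] (G : SimpleGraph α) (Δ : ℕ)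
    (hreg : ∀ v : α, (G.neighborSet v).ncard = Δ)
    (Uside : α → Prop)
    (hbip : ∀ u v : α, G.Adj u v → (Uside u ↔ ¬ Uside v))
    (ori : α → α → Prop)
    (hori : ∀ u v : α, G.Adj u v → (ori u v ↔ ¬ ori v u))
    (x : α → ℕ)
    (hx : ∀ w : α, x w = {u : α | G.Adj u w ∧ ori u w}.ncard)
    (hstable : ∀ u v : α, G.Adj u v → ori u v → (x v : ℤ) - (x u : ℤ) ≤ 1)
    (Red Blue : Sym2 α → Prop)
    (hred : ∀ u v : α, G.Adj u v → Uside u → ¬ Uside v → (Red s(u, v) ↔ ori u v))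
    (hblue : ∀ u v : α, G.Adj u v → Uside u → ¬ Uside v → (Blue s(u, v) ↔ ori v u)) :
    ∀ e ∈ G.edgeSet,
      (Red e →
        ({e' | e' ∈ G.edgeSet ∧ e' ≠ e ∧ (∃ w, w ∈ e ∧ w ∈ e') ∧ Red e'}.ncard : ℤ)
          ≤ (Δ : ℤ) - 1) ∧
      (Blue e →
        ({e' | e' ∈ G.edgeSet ∧ e' ≠ e ∧ (∃ w, w ∈ e ∧ w ∈ e') ∧ Blue e'}.ncard : ℤ)
          ≤ (Δ : ℤ) - 1) := by
  intro e he
  refine ⟨color_bound G Δ hreg Uside hbip ori hori x hx hstable Red hred e he,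
    color_bound G Δ hreg (fun v => ¬ Uside v) (fun u v h => not_congr (hbip u v h)) ori hori x hx
      hstable Blue (fun u v h hu hv => ?_) e he⟩
  rw [Sym2.eq_swap]
  exact hblue v u h.symm (not_not.1 hv) hu
end

section
/- Let G = (U ∪ V, E) be a bipartite simple graph, let ε ≥ 0 and β ≥ 0 be reals, and let λ_e ∈ [0,1] be given for every edge e ∈ E. For every edge e = {u,v} with u ∈ U, v ∈ V define η_e := 1 − 2λ_e − (1−λ_e)·deg(u) + λ_e·deg(v) + ε·(λ_e − 1/2)·deg(e) + (2λ_e − 1)·β. Then any generalized (ε,β)-balanced edge orientation of G with respect to the parameters η_e, when converted to a 2-coloring of the edges by coloring red every edge oriented from its U-endpoint to its V-endpoint and blue every edge oriented from its V-endpoint to its U-endpoint, is a generalized (1+ε, 2β)-relaxed defective 2-edge coloring of G with respect to the parameters λ_e. -/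
/-!
The proof is an exact count. Let `e = {u, v}` with `u ∈ U`, `v ∈ V`. At `v` the red edges are the
incoming ones, and at `u` they are the outgoing ones, so a red `e` has at most
`(x v - 1) + (deg u - x u - 1)` adjacent red edges; symmetrically, a blue `e` has at most
`(x u - 1) + (deg v - x v - 1)` adjacent blue edges. Bounding `x v - x u`, respectively
`x u - x v`, by the balance condition and inserting the value of `η e` gives precisely the claimed
defect. The count is carried by `ncard_adjacent_add_two_le` and `ncard_out_add_ncard_in`.
-/

/-- If `{u, v}` has the property `C`, the adjacent edges with property `C` are counted by the
`C`-edges at `u` and at `v`, where `{u, v}` itself is discarded once at each endpoint. -/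
theorem ncard_adjacent_add_two_le {α : Type*} [Fintype α] (G : SimpleGraph α)
    (C : Sym2 α → Prop) {u v : α} (huv : G.Adj u v) (hC : C s(u, v)) :
    {e' | e' ∈ G.edgeSet ∧ e' ≠ s(u, v) ∧ (∃ w, w ∈ s(u, v) ∧ w ∈ e') ∧ C e'}.ncard + 2
      ≤ {w | G.Adj u w ∧ C s(u, w)}.ncard + {w | G.Adj v w ∧ C s(v, w)}.ncard := by
  set A := {w | G.Adj u w ∧ C s(u, w)} with hA
  set B := {w | G.Adj v w ∧ C s(v, w)} with hB
  have hvA : v ∈ A := ⟨huv, hC⟩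
  have huB : u ∈ B := ⟨huv.symm, by rwa [Sym2.eq_swap]⟩
  have hsub : {e' | e' ∈ G.edgeSet ∧ e' ≠ s(u, v) ∧ (∃ w, w ∈ s(u, v) ∧ w ∈ e') ∧ C e'}
      ⊆ Set.image (fun w => s(u, w)) (A \ {v}) ∪ Set.image (fun w => s(v, w)) (B \ {u}) := by
    rintro e' ⟨he, hne, ⟨w, hw, hw'⟩, hCe⟩
    obtain ⟨z, rfl⟩ := Sym2.mem_iff_exists.1 hw'
    rcases Sym2.mem_iff.1 hw with rfl | rfl
    · refine Or.inl ⟨z, ⟨⟨he, hCe⟩, ?_⟩, rfl⟩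
      rintro rfl
      exact hne rfl
    · refine Or.inr ⟨z, ⟨⟨he, hCe⟩, ?_⟩, rfl⟩
      rintro rfl
      exact hne Sym2.eq_swap
  have h1 := Set.ncard_le_ncard hsub (Set.toFinite _)
  have h2 := Set.ncard_union_le (Set.image (fun w => s(u, w)) (A \ {v}))
    (Set.image (fun w => s(v, w)) (B \ {u}))
  have h3 := Set.ncard_image_le (f := fun w => s(u, w)) (Set.toFinite (A \ {v}))
  have h4 := Set.ncard_image_le (f := fun w => s(v, w)) (Set.toFinite (B \ {u}))
  have h5 := Set.ncard_sdiff_singleton_add_one hvA (Set.toFinite A)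
  have h6 := Set.ncard_sdiff_singleton_add_one huB (Set.toFinite B)
  omega

/-- Out-degree plus in-degree is the degree. -/
theorem ncard_out_add_ncard_in {α : Type*} [Fintype α] (G : SimpleGraph α)
    (ori : α → α → Prop) (hori : ∀ u v : α, G.Adj u v → (ori u v ↔ ¬ ori v u)) (u : α) :
    {w | G.Adj u w ∧ ori u w}.ncard + {w | G.Adj w u ∧ ori w u}.ncard
      = (G.neighborSet u).ncard := by
  rw [← Set.ncard_union_eq _ (Set.toFinite _) (Set.toFinite _)]
  · congr 1
    ext w
    simp only [Set.mem_union, Set.mem_ofPred_eq, SimpleGraph.mem_neighborSet, G.adj_comm w u]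
    have := hori u w
    tauto
  · rw [Set.disjoint_left]
    rintro w ⟨h, ho⟩ ⟨-, ho'⟩
    exact (hori u w h).1 ho ho'

/-- (Lemma: orientation to defective coloring.)  Given a bipartite graph
`G = (U ∪ V, E)`, reals `ε ≥ 0`, `β ≥ 0`, and parameters `λ_e ∈ [0,1]`, define for every edge
`e = {u,v}` (`u ∈ U`, `v ∈ V`)
`η_e = 1 - 2λ_e - (1-λ_e)·deg(u) + λ_e·deg(v) + ε·(λ_e - 1/2)·deg(e) + (2λ_e - 1)·β`.
Then any generalized `(ε,β)`-balanced edge orientation of `G` w.r.t. the `η_e`, converted to a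
`2`-coloring by coloring red the edges oriented from `U` to `V` and blue those oriented from
`V` to `U`, is a generalized `(1+ε, 2β)`-relaxed defective `2`-edge coloring w.r.t. the `λ_e`. -/
theorem stmt2 {α : Type*} [Fintype α] (G : SimpleGraph α)
    (Uside : α → Prop)
    (hbip : ∀ u v : α, G.Adj u v → (Uside u ↔ ¬ Uside v))
    (ε β : ℝ) (hε : 0 ≤ ε) (hβ : 0 ≤ β)
    (lam : Sym2 α → ℝ) (hlam : ∀ e ∈ G.edgeSet, lam e ∈ Set.Icc (0 : ℝ) 1)
    (edeg : Sym2 α → ℝ)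
    (hedeg : ∀ u v : α, G.Adj u v →
      edeg s(u, v) = ((G.neighborSet u).ncard : ℝ) + ((G.neighborSet v).ncard : ℝ) - 2)
    (η : Sym2 α → ℝ)
    (hη : ∀ u v : α, G.Adj u v → Uside u → ¬ Uside v →
      η s(u, v) = 1 - 2 * lam s(u, v) - (1 - lam s(u, v)) * ((G.neighborSet u).ncard : ℝ)
        + lam s(u, v) * ((G.neighborSet v).ncard : ℝ)
        + ε * (lam s(u, v) - 1 / 2) * edeg s(u, v) + (2 * lam s(u, v) - 1) * β)
    (ori : α → α → Prop)
    (hori : ∀ u v : α, G.Adj u v → (ori u v ↔ ¬ ori v u))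
    (x : α → ℕ)
    (hx : ∀ w : α, x w = {u : α | G.Adj u w ∧ ori u w}.ncard)
    (hbal : ∀ u v : α, G.Adj u v → Uside u → ¬ Uside v →
      (ori u v → (x v : ℝ) - (x u : ℝ) ≤ η s(u, v) + 1 + ε / 2 * edeg s(u, v) + β) ∧
      (ori v u → (x u : ℝ) - (x v : ℝ) ≤ - η s(u, v) + 1 + ε / 2 * edeg s(u, v) + β))
    (Red Blue : Sym2 α → Prop)
    (hred : ∀ u v : α, G.Adj u v → Uside u → ¬ Uside v → (Red s(u, v) ↔ ori u v))
    (hblue : ∀ u v : α, G.Adj u v → Uside u → ¬ Uside v → (Blue s(u, v) ↔ ori v u)) :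
    ∀ e ∈ G.edgeSet,
      (Red e →
        ({e' | e' ∈ G.edgeSet ∧ e' ≠ e ∧ (∃ w, w ∈ e ∧ w ∈ e') ∧ Red e'}.ncard : ℝ)
          ≤ (1 + ε) * lam e * edeg e + lam e * (2 * β)) ∧
      (Blue e →
        ({e' | e' ∈ G.edgeSet ∧ e' ≠ e ∧ (∃ w, w ∈ e ∧ w ∈ e') ∧ Blue e'}.ncard : ℝ)
          ≤ (1 + ε) * (1 - lam e) * edeg e + (1 - lam e) * (2 * β)) := by
  intro e he
  -- Name the endpoints of `e` so that `u` is on the `U`-side.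
  obtain ⟨u, v, rfl, huv, hu, hv⟩ :
      ∃ u v, e = s(u, v) ∧ G.Adj u v ∧ Uside u ∧ ¬ Uside v := by
    induction e using Sym2.ind with
    | _ a b =>
      have hab : G.Adj a b := he
      by_cases ha : Uside a
      · exact ⟨a, b, rfl, hab, ha, (hbip a b hab).1 ha⟩
      · exact ⟨b, a, Sym2.eq_swap, hab.symm, (hbip b a hab.symm).2 ha, ha⟩
  have hnu : ∀ w, G.Adj u w → ¬ Uside w := fun w h => (hbip u w h).1 hu
  have hnv : ∀ w, G.Adj v w → Uside w := fun w h => (hbip w v h.symm).2 hv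
  have hdu := ncard_out_add_ncard_in G ori hori u
  have hdv := ncard_out_add_ncard_in G ori hori v
  rw [← hx] at hdu hdv
  have hdu' := congrArg (Nat.cast (R := ℝ)) hdu
  have hdv' := congrArg (Nat.cast (R := ℝ)) hdv
  push_cast at hdu' hdv'
  have hηe := hη u v huv hu hv
  have hde := hedeg u v huv
  constructor
  · intro hR
    have hcount := ncard_adjacent_add_two_le G Red huv hR
    have hA : {w | G.Adj u w ∧ Red s(u, w)} = {w | G.Adj u w ∧ ori u w} := by
      ext w
      exact and_congr_right fun h => hred u w h hu (hnu w h)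
    have hB : {w | G.Adj v w ∧ Red s(v, w)} = {w | G.Adj w v ∧ ori w v} := by
      ext w
      simp only [Set.mem_ofPred_eq, G.adj_comm w v]
      refine and_congr_right fun h => ?_
      rw [Sym2.eq_swap]
      exact hred w v h.symm (hnv w h) hv
    rw [hA, hB, ← hx] at hcount
    have hcount' := (Nat.cast_le (α := ℝ)).2 hcount
    push_cast at hcount'
    have hb := (hbal u v huv hu hv).1 ((hred u v huv hu hv).1 hR)
    rw [hηe] at hb
    rw [hde] at hb ⊢
    linarith
  · intro hBl
    have hcount := ncard_adjacent_add_two_le G Blue huv hBl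
    have hA : {w | G.Adj u w ∧ Blue s(u, w)} = {w | G.Adj w u ∧ ori w u} := by
      ext w
      simp only [Set.mem_ofPred_eq, G.adj_comm w u]
      exact and_congr_right fun h => hblue u w h hu (hnu w h)
    have hB : {w | G.Adj v w ∧ Blue s(v, w)} = {w | G.Adj v w ∧ ori v w} := by
      ext w
      refine and_congr_right fun h => ?_
      rw [Sym2.eq_swap]
      exact hblue w v h.symm (hnv w h) hv
    rw [hA, hB, ← hx] at hcount
    have hcount' := (Nat.cast_le (α := ℝ)).2 hcount
    push_cast at hcount'
    have hb := (hbal u v huv hu hv).2 ((hblue u v huv hu hv).1 hBl)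
    rw [hηe] at hb
    rw [hde] at hb ⊢
    linarith
end

section
/- There exists a constant C > 0 with the following property. For every finite bipartite simple graph G = (U ∪ V, E) whose maximum edge degree Δ̄ satisfies Δ̄ ≥ 3, every real ε with 0 < ε ≤ 1, and every assignment of parameters λ_e ∈ [0,1] to the edges e ∈ E, there exists a generalized (1+ε, β)-relaxed defective 2-edge coloring of G with respect to the parameters λ_e, where β = C·(ln Δ̄)³/ε⁵. -/
/-!
The bound already holds with `ε = β = 0`, on every finite graph, by a potential argument.
Write `d(e)` for the number of edges adjacent to `e` and `r(e)` for the number of red ones, and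
let the set `S` of red edges minimise

  `Φ(S) = #{(e, e') ∈ S × S : e, e' adjacent} - 2 ∑_{e ∈ S} λ_e d(e)`.

Adding an edge `e` to `S` changes `Φ` by `2 (r(e) - λ_e d(e))`, and removing it changes `Φ` by the
opposite amount. So minimality gives `r(e) ≤ λ_e d(e)` for red `e`, and `r(e) ≥ λ_e d(e)` for
blue `e`; the latter says that at most `(1 - λ_e) d(e)` of the edges adjacent to `e` are blue.
This is `exists_stable_set`. It remains to bound `d(e)` by `deg(u) + deg(v) - 2`
(`ncard_adjacent_edges_le`) and to observe that `ε` and `β` only weaken the requirement.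
-/

/-- The potential of the set `S` of red elements, for adjacency weights `A` and linear weights `w`.
For a symmetric `A` with zero diagonal, inserting `e` changes it by
`2 * (∑ e' ∈ S, A e e' - w e)`. -/
noncomputable def potential {E : Type*} (A : E → E → ℝ) (w : E → ℝ) (S : Finset E) : ℝ :=
  ∑ e ∈ S, ∑ e' ∈ S, A e e' - 2 * ∑ e ∈ S, w e

lemma potential_insert {E : Type*} [DecidableEq E] (A : E → E → ℝ) (w : E → ℝ)
    (symm : ∀ e e', A e e' = A e' e) (diag : ∀ e, A e e = 0) {S : Finset E} {e : E} (he : e ∉ S) :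
    potential A w (insert e S) = potential A w S + 2 * (∑ e' ∈ S, A e e' - w e) := by
  have h : ∑ x ∈ S, A x e = ∑ x ∈ S, A e x := Finset.sum_congr rfl fun x _ => symm x e
  simp only [potential, Finset.sum_insert he, Finset.sum_add_distrib, diag, h]
  ring

/-- A minimiser of the potential is stable under changing the color of any single element. -/
lemma exists_stable_weighted {E : Type*} [Fintype E] (A : E → E → ℝ) (w : E → ℝ)
    (symm : ∀ e e', A e e' = A e' e) (diag : ∀ e, A e e = 0) :
    ∃ S : Finset E, (∀ e ∈ S, ∑ e' ∈ S, A e e' ≤ w e) ∧ ∀ e ∉ S, w e ≤ ∑ e' ∈ S, A e e' := by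
  classical
  obtain ⟨S, hS⟩ := Finite.exists_min (potential A w)
  refine ⟨S, fun e he => ?_, fun e he => ?_⟩
  · have h := potential_insert A w symm diag (Finset.notMem_erase e S)
    rw [Finset.insert_erase he] at h
    have hsum : ∑ e' ∈ S, A e e' = ∑ e' ∈ S.erase e, A e e' := by
      rw [← Finset.add_sum_erase S _ he, diag, zero_add]
    linarith [hS (S.erase e)]
  · linarith [hS (insert e S), potential_insert A w symm diag he]

/-- Every finite graph (here given by a symmetric irreflexive relation `R`) has a red/blue vertex
coloring in which each red `e` has at most a `lam e` fraction of red neighbors, and each blue `e`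
at most a `1 - lam e` fraction of blue ones. -/
lemma exists_stable_set {E : Type*} [Finite E] (R : E → E → Prop)
    (symm : ∀ e e', R e e' → R e' e) (irrefl : ∀ e, ¬ R e e) (lam : E → ℝ) :
    ∃ Red : E → Prop, ∀ e,
      (Red e → ({e' | R e e' ∧ Red e'}.ncard : ℝ) ≤ lam e * {e' | R e e'}.ncard) ∧
      (¬ Red e → ({e' | R e e' ∧ ¬ Red e'}.ncard : ℝ) ≤ (1 - lam e) * {e' | R e e'}.ncard) := by
  classical
  have := Fintype.ofFinite E
  obtain ⟨S, hred, hblue⟩ := exists_stable_weighted (fun e e' => if R e e' then (1 : ℝ) else 0)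
    (fun e => lam e * {e' | R e e'}.ncard)
    (fun e e' => by simp only [show R e e' ↔ R e' e from ⟨symm _ _, symm _ _⟩])
    (fun e => if_neg (irrefl e))
  have hsum (e : E) : ∑ e' ∈ S, (if R e e' then (1 : ℝ) else 0)
      = {e' | R e e' ∧ e' ∈ S}.ncard := by
    rw [Finset.sum_boole, ← Set.ncard_coe_finset]
    congr 2
    ext; simp [and_comm]
  refine ⟨(· ∈ S), fun e => ⟨fun he => ?_, fun he => ?_⟩⟩
  · simpa only [hsum] using hred e he
  · have h := hblue e he
    simp only [hsum] at h
    have hsplit : {e' | R e e' ∧ e' ∈ S}.ncard + {e' | R e e' ∧ e' ∉ S}.ncard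
        = {e' | R e e'}.ncard :=
      Set.ncard_inter_add_ncard_sdiff_eq_ncard {e' | R e e'} (S : Set E)
    have hsplit' : ({e' | R e e' ∧ e' ∈ S}.ncard : ℝ) + {e' | R e e' ∧ e' ∉ S}.ncard
        = {e' | R e e'}.ncard := by exact_mod_cast hsplit
    linarith

/-- An edge adjacent to `s(u, v)` is `s(u, x)` for a neighbor `x ≠ v` of `u`, or `s(v, x)` for a
neighbor `x ≠ u` of `v`. -/
lemma ncard_adjacent_edges_le {α : Type*} [Finite α] (G : SimpleGraph α) {u v : α}
    (h : G.Adj u v) :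
    ({e' | e' ∈ G.edgeSet ∧ e' ≠ s(u, v) ∧ ∃ w, w ∈ s(u, v) ∧ w ∈ e'}.ncard : ℝ)
      ≤ (G.neighborSet u).ncard + (G.neighborSet v).ncard - 2 := by
  have hsub : {e' | e' ∈ G.edgeSet ∧ e' ≠ s(u, v) ∧ ∃ w, w ∈ s(u, v) ∧ w ∈ e'} ⊆
      (fun x => s(u, x)) '' (G.neighborSet u \ {v}) ∪
        (fun x => s(v, x)) '' (G.neighborSet v \ {u}) := by
    rintro e' ⟨he, hne, w, hw, hwe⟩
    obtain ⟨x, rfl⟩ := Sym2.mem_iff_exists.1 hwe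
    rw [SimpleGraph.mem_edgeSet] at he
    rcases Sym2.mem_iff.1 hw with rfl | rfl
    · exact Or.inl ⟨x, ⟨he, by rintro rfl; exact hne rfl⟩, rfl⟩
    · exact Or.inr ⟨x, ⟨he, by rintro rfl; exact hne Sym2.eq_swap⟩, rfl⟩
  have hle := (Set.ncard_le_ncard hsub (Set.toFinite _)).trans ((Set.ncard_union_le _ _).trans
    (Nat.add_le_add (Set.ncard_image_le (Set.toFinite _)) (Set.ncard_image_le (Set.toFinite _))))
  have hu := Set.ncard_sdiff_singleton_add_one (show v ∈ G.neighborSet u from h)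
  have hv := Set.ncard_sdiff_singleton_add_one (show u ∈ G.neighborSet v from h.symm)
  rw [le_sub_iff_add_le]
  exact_mod_cast (by lia)

/-- There is a constant `C > 0` such that for every finite bipartite simple
graph `G = (U ∪ V, E)` with maximum edge degree `Δ̄ ≥ 3`, every `0 < ε ≤ 1` and every
assignment of parameters `λ_e ∈ [0,1]` to the edges, there exists a generalized
`(1+ε, β)`-relaxed defective `2`-edge coloring of `G` w.r.t. the `λ_e`, where
`β = C·(ln Δ̄)³/ε⁵`.  (Red/blue coloring of the edges; a red edge `e` must have at most
`(1+ε)·λ_e·deg(e) + λ_e·β` adjacent red edges, and a blue edge `e` at most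
`(1+ε)·(1-λ_e)·deg(e) + (1-λ_e)·β` adjacent blue edges.) -/
theorem stmt4 :
    ∃ C : ℝ, 0 < C ∧
      ∀ (α : Type) [Fintype α] (G : SimpleGraph α) (Uside : α → Prop),
        (∀ u v : α, G.Adj u v → (Uside u ↔ ¬ Uside v)) →
      ∀ (Δbar : ℕ),
        (∀ u v : α, G.Adj u v →
          (G.neighborSet u).ncard + (G.neighborSet v).ncard - 2 ≤ Δbar) →
        (∃ u v : α, G.Adj u v ∧
          (G.neighborSet u).ncard + (G.neighborSet v).ncard - 2 = Δbar) →
        3 ≤ Δbar →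
      ∀ (ε : ℝ), 0 < ε → ε ≤ 1 →
      ∀ (lam : Sym2 α → ℝ), (∀ e ∈ G.edgeSet, lam e ∈ Set.Icc (0 : ℝ) 1) →
      ∀ (edeg : Sym2 α → ℝ),
        (∀ u v : α, G.Adj u v →
          edeg s(u, v) = ((G.neighborSet u).ncard : ℝ) + ((G.neighborSet v).ncard : ℝ) - 2) →
      ∃ Red : Sym2 α → Prop,
        ∀ e ∈ G.edgeSet,
          (Red e →
            ({e' | e' ∈ G.edgeSet ∧ e' ≠ e ∧ (∃ w, w ∈ e ∧ w ∈ e') ∧ Red e'}.ncard : ℝ)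
              ≤ (1 + ε) * lam e * edeg e + lam e * (C * (Real.log Δbar) ^ 3 / ε ^ 5)) ∧
          (¬ Red e →
            ({e' | e' ∈ G.edgeSet ∧ e' ≠ e ∧ (∃ w, w ∈ e ∧ w ∈ e') ∧ ¬ Red e'}.ncard : ℝ)
              ≤ (1 + ε) * (1 - lam e) * edeg e
                + (1 - lam e) * (C * (Real.log Δbar) ^ 3 / ε ^ 5)) := by
  refine ⟨1, one_pos, ?_⟩
  intro α _ G _ _ Δbar _ _ _ ε hε _ lam hlam edeg hedeg
  obtain ⟨Red, hRed⟩ := exists_stable_set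
    (fun e e' : Sym2 α => e ∈ G.edgeSet ∧ e' ∈ G.edgeSet ∧ e' ≠ e ∧ ∃ w, w ∈ e ∧ w ∈ e')
    (fun e e' ⟨he, he', hne, w, hw, hw'⟩ => ⟨he', he, hne.symm, w, hw', hw⟩)
    (fun e h => h.2.2.1 rfl) lam
  refine ⟨Red, fun e he => ?_⟩
  have hdeg : ({e' | e' ∈ G.edgeSet ∧ e' ≠ e ∧ ∃ w, w ∈ e ∧ w ∈ e'}.ncard : ℝ) ≤ edeg e := by
    induction e with
    | h u v => rw [hedeg u v he]; exact ncard_adjacent_edges_le G he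
  have hβ : 0 ≤ 1 * (Real.log Δbar) ^ 3 / ε ^ 5 := by
    have := Real.log_natCast_nonneg Δbar
    positivity
  -- Passing from `(0, 0)` to `(ε, β)` only relaxes the bound, for every fraction `t ≥ 0`.
  have hrelax {t : ℝ} (ht : 0 ≤ t) :
      t * ({e' | e' ∈ G.edgeSet ∧ e' ≠ e ∧ ∃ w, w ∈ e ∧ w ∈ e'}.ncard : ℝ)
        ≤ (1 + ε) * t * edeg e + t * (1 * (Real.log Δbar) ^ 3 / ε ^ 5) := by
    have h1 := mul_le_mul_of_nonneg_left hdeg ht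
    have h2 := mul_nonneg ht hβ
    have h3 := mul_nonneg hε.le (mul_nonneg ht ((Nat.cast_nonneg _).trans hdeg))
    linarith
  obtain ⟨h0, h1⟩ := hlam e he
  obtain ⟨hr, hb⟩ := hRed e
  simp only [he, true_and, and_assoc] at hr hb
  exact ⟨fun h => (hr h).trans (hrelax h0), fun h => (hb h).trans (hrelax (sub_nonneg.2 h1))⟩
end

section
/- There exists a constant C > 0 with the following property. For every finite bipartite simple graph G = (U ∪ V, E) whose maximum edge degree Δ̄ satisfies Δ̄ ≥ 3, every real χ with 0 < χ ≤ 1/2, and every k ∈ ℕ, there exists a partition of the edge set E into 2^k classes such that every edge e ∈ E has at most Δ̄·((1+χ)/2)^k + 4C·(ln Δ̄)³/χ⁵ adjacent edges lying in the same class as e. -/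
/-!
The bound holds even without the additive term: the edges can be split into `2 ^ k` classes so that
every edge has at most `Δ̄ / 2 ^ k` adjacent edges in its own class.

A single halving step works as follows (`exists_halving`). At every vertex of one side, pair up the
incident edges, leaving at most one unpaired; do the same on the other side. This gives two
involutions `σ`, `τ` of the edge set, and the union of two matchings is bipartite, so there is a
2-colouring in which paired edges receive different colours (`exists_alternating`). Hence each
colour occurs at most `⌈d / 2⌉` times at a vertex of degree `d`. Repeating this inside every class
(`exists_splitting`) yields `2 ^ k` classes with at most `⌈d / 2 ^ k⌉` edges each at such a vertex.
Since `⌈d / 2 ^ k⌉ - 1 ≤ (d - 1) / 2 ^ k`, an edge `uv` has at most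
`(deg u + deg v - 2) / 2 ^ k` adjacent edges in its class.
-/

/-- Two fixed-point-free involutions admit a common alternating 2-colouring. With `ρ = σ τ`, no
point `x` lies in the `ρ`-orbit of `σ x`, because each `σ ρⁿ` is conjugate to `σ` or to `τ`. So `σ`
acts on the `ρ`-orbits as a fixed-point-free involution, and it suffices to colour these orbits. -/
lemma exists_alternating_of_fixedPointFree {X : Type*} (σ τ : Equiv.Perm X)
    (hσ : σ * σ = 1) (hτ : τ * τ = 1) (hσf : ∀ x, σ x ≠ x) (hτf : ∀ x, τ x ≠ x) :
    ∃ c : X → Bool, (∀ x, c (σ x) = !c x) ∧ (∀ x, c (τ x) = !c x) := by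
  classical
  have hσi : σ⁻¹ = σ := inv_eq_of_mul_eq_one_left hσ
  have hτi : τ⁻¹ = τ := inv_eq_of_mul_eq_one_left hτ
  set ρ := σ * τ with hρ
  have hρi : ρ⁻¹ = τ * σ := by rw [hρ, mul_inv_rev, hσi, hτi]
  have hconj : SemiconjBy σ ρ ρ⁻¹ := by
    rw [hρi]
    simp only [SemiconjBy, hρ]
    rw [← mul_assoc, hσ, mul_assoc, hσ, one_mul, mul_one]
  have hconjn (n : ℤ) : σ * ρ ^ n = ρ ^ (-n) * σ := by
    have := (hconj.zpow_right n).eq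
    rwa [inv_zpow'] at this
  have hτρ : τ = σ * ρ := by rw [hρ, ← mul_assoc, hσ, one_mul]
  have key (n : ℤ) (x : X) : (ρ ^ n) x ≠ σ x := by
    intro h
    have h1 : (σ * ρ ^ n) x = x := by
      rw [Equiv.Perm.mul_apply, h, ← Equiv.Perm.mul_apply, hσ]; rfl
    rcases Int.even_or_odd' n with ⟨m, rfl | rfl⟩
    · have h2 : σ * ρ ^ (2 * m) = ρ ^ (-m) * σ * ρ ^ m := by
        rw [two_mul, zpow_add, ← mul_assoc, hconjn]
      rw [h2, Equiv.Perm.mul_apply, Equiv.Perm.mul_apply, zpow_neg, Equiv.Perm.inv_eq_iff_eq] at h1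
      exact hσf _ h1
    · have h2 : σ * ρ ^ (2 * m + 1) = ρ ^ (-m) * τ * ρ ^ m := by
        rw [show 2 * m + 1 = m + (1 + m) by ring, zpow_add, zpow_add, ← mul_assoc, hconjn, hτρ,
          zpow_one]
        simp only [mul_assoc]
      rw [h2, Equiv.Perm.mul_apply, Equiv.Perm.mul_apply, zpow_neg, Equiv.Perm.inv_eq_iff_eq] at h1
      exact hτf _ h1
  let S : Setoid X := Equiv.Perm.SameCycle.setoid ρ
  let π : X → Quotient S := Quotient.mk S
  have hπ (x y : X) : π x = π y ↔ ρ.SameCycle x y := Quotient.eq (r := S)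
  have hne (x : X) : π x ≠ π (σ x) := by
    rw [Ne, hπ]
    rintro ⟨n, hn⟩
    exact key n x hn
  have hπσ (x y : X) (h : π x = π y) : π (σ x) = π (σ y) := by
    rw [hπ] at h ⊢
    obtain ⟨n, rfl⟩ := h
    refine ⟨-n, ?_⟩
    rw [← Equiv.Perm.mul_apply, ← hconjn]; rfl
  have hσσ (x : X) : σ (σ x) = x := by rw [← Equiv.Perm.mul_apply, hσ]; rfl
  let _ : LinearOrder (Quotient S) := linearOrderOfSTO WellOrderingRel
  have hcσ (x : X) : decide (π (σ x) < π (σ (σ x))) = !decide (π x < π (σ x)) := by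
    rw [hσσ]
    rcases lt_or_gt_of_ne (hne x) with h | h
    · simp [h, h.le]
    · simp [h, h.le]
  refine ⟨fun x => decide (π x < π (σ x)), hcσ, fun x => ?_⟩
  have h1 : π (ρ x) = π x := by
    rw [hπ]
    exact (Equiv.Perm.sameCycle_apply_left).2 (Equiv.Perm.SameCycle.refl _ _)
  have h2 : τ x = σ (ρ x) := by rw [hτρ]; rfl
  have h3 := hcσ (ρ x)
  have h4 : π (τ x) = π (σ x) := by rw [h2, hπσ _ _ h1]
  rw [← h2, h1] at h3
  simpa only [← h4] using h3

/-- Two arbitrary involutions admit a common 2-colouring that alternates along the non-fixed points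
of both. Passing to `X × Bool`, with fixed points swapped between the two sheets, reduces this to
the fixed-point-free case. -/
lemma exists_alternating {X : Type*} (σ τ : Equiv.Perm X)
    (hσ : ∀ x, σ (σ x) = x) (hτ : ∀ x, τ (τ x) = x) :
    ∃ c : X → Bool, (∀ x, σ x ≠ x → c (σ x) = !c x) ∧ (∀ x, τ x ≠ x → c (τ x) = !c x) := by
  classical
  let F (s : Equiv.Perm X) (p : X × Bool) : X × Bool :=
    if s p.1 = p.1 then (p.1, !p.2) else (s p.1, p.2)
  have hF (s : Equiv.Perm X) (hs : ∀ x, s (s x) = x) : Function.Involutive (F s) := by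
    rintro ⟨x, b⟩
    by_cases h : s x = x
    · simp [F, h]
    · simp [F, h, hs, Ne.symm h]
  have hFf (s : Equiv.Perm X) (p : X × Bool) : F s p ≠ p := by
    obtain ⟨x, b⟩ := p
    by_cases h : s x = x <;> simp [F, h]
  obtain ⟨c, h1, h2⟩ := exists_alternating_of_fixedPointFree
    (hF σ hσ).toPerm (hF τ hτ).toPerm
    (Equiv.ext (hF σ hσ)) (Equiv.ext (hF τ hτ)) (hFf σ) (hFf τ)
  refine ⟨fun x => c (x, false), fun x hx => ?_, fun x hx => ?_⟩
  · simpa [F, hx] using h1 (x, false)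
  · simpa [F, hx] using h2 (x, false)

/-- The points of a finite set can be paired up inside the fibres of `a`, leaving at most one point
of each fibre unpaired: an involution with the fewest fixed points does this. -/
lemma exists_pairing {E A : Type*} [Finite E] (a : E → A) :
    ∃ σ : Equiv.Perm E, (∀ x, σ (σ x) = x) ∧ (∀ x, a (σ x) = a x) ∧
      ∀ x y, σ x = x → σ y = y → a x = a y → x = y := by
  classical
  have hex : ∃ σ : Equiv.Perm E, (∀ x, σ (σ x) = x) ∧ (∀ x, a (σ x) = a x) :=
    ⟨1, fun _ => rfl, fun _ => rfl⟩
  obtain ⟨σ, ⟨h1, h2⟩, hmin⟩ := Set.exists_min_image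
    {σ : Equiv.Perm E | (∀ x, σ (σ x) = x) ∧ (∀ x, a (σ x) = a x)}
    (fun σ => {x | σ x = x}.ncard) (Set.toFinite _) hex
  refine ⟨σ, h1, h2, fun x y hx hy hxy => ?_⟩
  by_contra hne
  have hval (z : E) : (Equiv.swap x y * σ) z = if z = x then y else if z = y then x else σ z := by
    rw [Equiv.Perm.mul_apply, Equiv.swap_apply_def]
    have e1 : σ z = x ↔ z = x := ⟨fun h => by rw [← h1 z, h, hx], fun h => by rw [h, hx]⟩
    have e2 : σ z = y ↔ z = y := ⟨fun h => by rw [← h1 z, h, hy], fun h => by rw [h, hy]⟩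
    simp only [e1, e2]
  have := hmin (Equiv.swap x y * σ) ⟨fun z => by
      simp only [hval]
      by_cases hz : z = x
      · simp [hz, Ne.symm hne]
      · by_cases hz' : z = y
        · simp [hz', Ne.symm hne]
        · have n1 : σ z ≠ x := fun h => hz (by rw [← h1 z, h, hx])
          have n2 : σ z ≠ y := fun h => hz' (by rw [← h1 z, h, hy])
          simp [hz, hz', n1, n2, h1], fun z => by
      rw [hval]
      split_ifs with hz hz'
      · rw [hz, hxy]
      · rw [hz', hxy]
      · exact h2 z⟩
  refine absurd this (not_le.2 (Set.ncard_lt_ncard ?_ (Set.toFinite _)))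
  refine (Set.ssubset_iff_of_subset fun z hz => ?_).2 ⟨x, hx, ?_⟩
  · simp only [Set.mem_ofPred_eq, hval] at hz ⊢
    split_ifs at hz with hz1 hz2
    · exact absurd (hz1 ▸ hz).symm hne
    · exact absurd (hz2 ▸ hz) hne
    · exact hz
  · simp only [Set.mem_ofPred_eq, hval, if_true]
    exact Ne.symm hne

/-- A colouring that alternates along a pairing of the fibres of `a` uses each colour on at most
half of a fibre, rounded up. -/
lemma two_mul_ncard_le {E A : Type*} [Finite E] (a : E → A) (σ : Equiv.Perm E)
    (h2 : ∀ x, a (σ x) = a x)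
    (h3 : ∀ x y, σ x = x → σ y = y → a x = a y → x = y) (c : E → Bool)
    (hc : ∀ x, σ x ≠ x → c (σ x) = !c x) (x : A) (b : Bool) :
    2 * {e | a e = x ∧ c e = b}.ncard ≤ {e | a e = x}.ncard + 1 := by
  have hsplit : {e | a e = x} = {e | a e = x ∧ c e = b} ∪ {e | a e = x ∧ c e = !b} := by
    ext e
    cases h : c e <;> cases b <;> simp [h]
  have hdisj : Disjoint {e | a e = x ∧ c e = b} {e | a e = x ∧ c e = !b} := by
    rw [Set.disjoint_left]
    rintro e ⟨_, h⟩ ⟨_, h'⟩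
    rw [h] at h'
    cases b <;> simp at h'
  have hcard := Set.ncard_union_eq hdisj (Set.toFinite _) (Set.toFinite _)
  rw [← hsplit] at hcard
  have hsub : {e | a e = x ∧ c e = b} ⊆
      {e | a e = x ∧ σ e = e} ∪ σ ⁻¹' {e | a e = x ∧ c e = !b} := by
    rintro e ⟨he, hb⟩
    by_cases h : σ e = e
    · exact Or.inl ⟨he, h⟩
    · exact Or.inr ⟨(h2 e).trans he, by rw [hc e h, hb]⟩
  have hle := (Set.ncard_le_ncard hsub (Set.toFinite _)).trans (Set.ncard_union_le _ _)
  have hone : {e | a e = x ∧ σ e = e}.ncard ≤ 1 :=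
    (Set.ncard_le_one (Set.toFinite _)).2 fun e he e' he' =>
      h3 e e' he.2 he'.2 (he.1.trans he'.1.symm)
  have hpre : (σ ⁻¹' {e | a e = x ∧ c e = !b}).ncard = {e | a e = x ∧ c e = !b}.ncard :=
    Set.ncard_preimage_of_injective_subset_range σ.injective (by simp [σ.surjective.range_eq])
  omega

/-- Balanced halving of a bipartite multigraph, given by its finite edge set `E` and the two
endpoint maps `a` and `b`. -/
lemma exists_halving {E A B : Type*} [Finite E] (a : E → A) (b : E → B) :
    ∃ c : E → Bool,
      (∀ x i, 2 * {e | a e = x ∧ c e = i}.ncard ≤ {e | a e = x}.ncard + 1) ∧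
      (∀ x i, 2 * {e | b e = x ∧ c e = i}.ncard ≤ {e | b e = x}.ncard + 1) := by
  obtain ⟨σ, s1, s2, s3⟩ := exists_pairing a
  obtain ⟨τ, t1, t2, t3⟩ := exists_pairing b
  obtain ⟨c, hc1, hc2⟩ := exists_alternating σ τ s1 t1
  exact ⟨c, two_mul_ncard_le a σ s2 s3 c hc1, two_mul_ncard_le b τ t2 t3 c hc2⟩

/-- Iterated halving. The inequalities are a subtraction-free form of `n - 1 ≤ (d - 1) / 2 ^ k`, for
`n` the number of edges of one class at a vertex and `d` its degree; they are stated at a vertex and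
class of an actual edge `e`, so that `1 ≤ n`. -/
lemma exists_splitting {E A B : Type*} [Finite E] (a : E → A) (b : E → B) (k : ℕ) :
    ∃ f : E → ℕ, (∀ e, f e < 2 ^ k) ∧
      (∀ e, 2 ^ k * {e' | a e' = a e ∧ f e' = f e}.ncard + 1
        ≤ {e' | a e' = a e}.ncard + 2 ^ k) ∧
      (∀ e, 2 ^ k * {e' | b e' = b e ∧ f e' = f e}.ncard + 1
        ≤ {e' | b e' = b e}.ncard + 2 ^ k) := by
  induction k with
  | zero => exact ⟨fun _ => 0, by simp, by simp, by simp⟩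
  | succ k ih =>
    obtain ⟨f, hf, ha, hb⟩ := ih
    -- Halving the graph whose vertices are pairs (vertex, class) halves every class separately.
    obtain ⟨c, ca, cb⟩ := exists_halving (fun e => (a e, f e)) (fun e => (b e, f e))
    have hiff (e e' : E) : 2 * f e' + (c e').toNat = 2 * f e + (c e).toNat ↔
        f e' = f e ∧ c e' = c e := by
      cases c e <;> cases c e' <;> simp <;> omega
    refine ⟨fun e => 2 * f e + (c e).toNat, fun e => ?_, fun e => ?_, fun e => ?_⟩
    · have := hf e
      have := Bool.toNat_le (c e)
      rw [pow_succ]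
      dsimp only
      omega
    · have h1 := ca (a e, f e) (c e)
      have h2 := ha e
      simp only [Prod.mk.injEq, and_assoc] at h1
      simp only [hiff]
      have h3 := Nat.mul_le_mul_left (2 ^ k) h1
      rw [pow_succ]
      linarith
    · have h1 := cb (b e, f e) (c e)
      have h2 := hb e
      simp only [Prod.mk.injEq, and_assoc] at h1
      simp only [hiff]
      have h3 := Nat.mul_le_mul_left (2 ^ k) h1
      rw [pow_succ]
      linarith


/-- There is a constant `C > 0` such that for every finite bipartite simple
graph `G = (U ∪ V, E)` with maximum edge degree `Δ̄ ≥ 3`, every real `0 < χ ≤ 1/2` and every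
`k ∈ ℕ`, there is a partition of the edge set into `2^k` classes such that every edge `e` has
at most `Δ̄·((1+χ)/2)^k + 4C·(ln Δ̄)³/χ⁵` adjacent edges in the same class as `e`. -/
theorem stmt9 :
    ∃ C : ℝ, 0 < C ∧
      ∀ (α : Type) [Fintype α] (G : SimpleGraph α) (Uside : α → Prop),
        (∀ u v : α, G.Adj u v → (Uside u ↔ ¬ Uside v)) →
      ∀ (Δbar : ℕ),
        (∀ u v : α, G.Adj u v →
          (G.neighborSet u).ncard + (G.neighborSet v).ncard - 2 ≤ Δbar) →
        (∃ u v : α, G.Adj u v ∧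
          (G.neighborSet u).ncard + (G.neighborSet v).ncard - 2 = Δbar) →
        3 ≤ Δbar →
      ∀ (χ : ℝ), 0 < χ → χ ≤ 1 / 2 →
      ∀ (k : ℕ),
      ∃ f : Sym2 α → Fin (2 ^ k),
        ∀ e ∈ G.edgeSet,
          ({e' | e' ∈ G.edgeSet ∧ e' ≠ e ∧ (∃ w, w ∈ e ∧ w ∈ e') ∧ f e' = f e}.ncard : ℝ)
            ≤ (Δbar : ℝ) * ((1 + χ) / 2) ^ k + 4 * C * (Real.log Δbar) ^ 3 / χ ^ 5 := by
  refine ⟨1, one_pos, ?_⟩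
  intro α _ G Uside hbip Δbar hΔ _ _ χ hχ _ k
  classical
  -- An edge is encoded as the ordered pair of its endpoints, the one in `Uside` first.
  let E := {p : α × α // G.Adj p.1 p.2 ∧ Uside p.1}
  let m : E → Sym2 α := fun p => s(p.1.1, p.1.2)
  have hm : Function.Injective m := by
    rintro ⟨⟨u, v⟩, h, hu⟩ ⟨⟨u', v'⟩, h', hu'⟩ heq
    simp only [m, Sym2.eq_iff] at heq
    rcases heq with ⟨rfl, rfl⟩ | ⟨rfl, rfl⟩
    · rfl
    · exact absurd hu' ((hbip _ _ h).1 hu)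
  have hsurj : ∀ e ∈ G.edgeSet, ∃ p : E, m p = e := by
    intro e he
    induction e using Sym2.ind with
    | _ u v =>
      have he' : G.Adj u v := he
      by_cases hu : Uside u
      · exact ⟨⟨(u, v), he', hu⟩, rfl⟩
      · exact ⟨⟨(v, u), he'.symm, (hbip _ _ he'.symm).2 hu⟩, Sym2.eq_swap⟩
  obtain ⟨g, hg, ha, hb⟩ := exists_splitting (fun p : E => p.1.1) (fun p : E => p.1.2) k
  let g' : E → Fin (2 ^ k) := fun p => ⟨g p, hg p⟩
  refine ⟨Function.extend m g' (fun _ => ⟨0, by positivity⟩), fun e he => ?_⟩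
  obtain ⟨p, rfl⟩ := hsurj e he
  have hpp : G.Adj p.1.1 p.1.2 := p.2.1
  set Sa : Set E := {q | q.1.1 = p.1.1 ∧ g q = g p} with hSa
  set Sb : Set E := {q | q.1.2 = p.1.2 ∧ g q = g p} with hSb
  have hsub : {e' | e' ∈ G.edgeSet ∧ e' ≠ m p ∧ (∃ w, w ∈ m p ∧ w ∈ e') ∧
      Function.extend m g' (fun _ => ⟨0, by positivity⟩) e' =
        Function.extend m g' (fun _ => ⟨0, by positivity⟩) (m p)} ⊆
      m '' ((Sa \ {p}) ∪ (Sb \ {p})) := by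
    rintro e' ⟨he', hne, ⟨w, hw, hw'⟩, hfe⟩
    obtain ⟨q, rfl⟩ := hsurj e' he'
    rw [hm.extend_apply, hm.extend_apply] at hfe
    have hgq : g q = g p := congrArg Fin.val hfe
    have hqp : q ≠ p := fun h => hne (h ▸ rfl)
    refine ⟨q, ?_, rfl⟩
    simp only [m, Sym2.mem_iff] at hw hw'
    have hp2 := (hbip _ _ p.2.1).1 p.2.2
    have hq2 := (hbip _ _ q.2.1).1 q.2.2
    rcases hw with rfl | rfl <;> rcases hw' with h | h
    · exact Or.inl ⟨⟨h.symm, hgq⟩, hqp⟩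
    · exact absurd (h ▸ p.2.2) hq2
    · exact absurd (h ▸ q.2.2) hp2
    · exact Or.inr ⟨⟨h.symm, hgq⟩, hqp⟩
  have hle := (Set.ncard_le_ncard hsub (Set.toFinite _)).trans
    ((Set.ncard_image_le (Set.toFinite _)).trans (Set.ncard_union_le _ _))
  have hca : (Sa \ {p}).ncard + 1 = Sa.ncard :=
    Set.ncard_sdiff_singleton_add_one (show p ∈ Sa from ⟨rfl, rfl⟩) (Set.toFinite _)
  have hcb : (Sb \ {p}).ncard + 1 = Sb.ncard :=
    Set.ncard_sdiff_singleton_add_one (show p ∈ Sb from ⟨rfl, rfl⟩) (Set.toFinite _)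
  have hda : {q : E | q.1.1 = p.1.1}.ncard ≤ (G.neighborSet p.1.1).ncard := by
    refine Set.ncard_le_ncard_of_injOn (fun q => q.1.2) (fun q hq => ?_) ?_ (Set.toFinite _)
    · have := q.2.1
      rw [show q.1.1 = p.1.1 from hq] at this
      exact this
    · intro q hq q' hq' h
      exact Subtype.ext (Prod.ext (Eq.trans hq (Eq.symm hq')) h)
  have hdb : {q : E | q.1.2 = p.1.2}.ncard ≤ (G.neighborSet p.1.2).ncard := by
    refine Set.ncard_le_ncard_of_injOn (fun q => q.1.1) (fun q hq => ?_) ?_ (Set.toFinite _)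
    · have := q.2.1.symm
      rw [show q.1.2 = p.1.2 from hq] at this
      exact this
    · intro q hq q' hq' h
      exact Subtype.ext (Prod.ext h (Eq.trans hq (Eq.symm hq')))
  have hD := hΔ _ _ hpp
  have h1 := ha p
  have h2 := hb p
  simp only [← hSa, ← hSb] at h1 h2
  have hD' : (G.neighborSet p.1.1).ncard + (G.neighborSet p.1.2).ncard ≤ Δbar + 2 := by omega
  have hnat : 2 ^ k * ((Sa \ {p}).ncard + (Sb \ {p}).ncard) ≤ Δbar := by
    rw [← hca] at h1
    rw [← hcb] at h2
    linarith
  have hreal := (Nat.mul_le_mul_left (2 ^ k) hle).trans hnat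
  generalize Set.ncard _ = N at hreal ⊢
  have hreal' : (2 : ℝ) ^ k * N ≤ Δbar := by exact_mod_cast hreal
  have hN : (N : ℝ) ≤ Δbar * (1 / 2) ^ k := by
    rw [one_div, inv_pow, ← div_eq_mul_inv, le_div_iff₀ (by positivity)]
    linarith
  have hpow : (1 / 2 : ℝ) ^ k ≤ ((1 + χ) / 2) ^ k := by gcongr; linarith
  have hlog : 0 ≤ Real.log Δbar := Real.log_natCast_nonneg _
  have hrest : 0 ≤ 4 * 1 * (Real.log Δbar) ^ 3 / χ ^ 5 := by positivity
  have := mul_le_mul_of_nonneg_left hpow (Nat.cast_nonneg (α := ℝ) Δbar)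
  linarith
end
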